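/- The map A₀ restricts to a group isomorphism from Spin(2,2) := {p ∈ ℍ₀ : H(p,p) = 1} onto SL₂(𝒜) := {B ∈ M₂(𝒜) : det B = 1}. -/

import Mathlib

noncomputable section

/-! ### The algebra `𝒜` of Lorentz (split-complex) numbers.

We realize `𝒜` (the real algebra with basis `{1, σ}`, `σ² = 1`) in split coordinates:
`(x, y) : ℝ × ℝ` represents `u + σ v` with `x = u + v`, `y = u - v`.  Multiplication is then
componentwise, `1 = (1,1)`, and `σ = (1, -1)` satisfies `σ² = 1`. -/

abbrev LorentzA : Type := ℝ × ℝ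

/-- The element `σ ∈ 𝒜`, with `σ² = 1`, `σ ∉ ℝ·1`. -/
def sA : LorentzA := (1, -1)

/-- The element `u + σ v` of `𝒜`. -/
def mkA (u v : ℝ) : LorentzA := (u + v, u - v)

/-- The inclusion `ℝ ⊆ 𝒜`, `t ↦ t·1`. -/
def toA (t : ℝ) : LorentzA := (t, t)

/-- Conjugation of `𝒜`: `u + σ v ↦ u - σ v` (the swap, in split coordinates). -/
def conjA (a : LorentzA) : LorentzA := (a.2, a.1)

/-- `|a|² := a·â = u² - v²`, as a real number (so that `a * conjA a = toA (nsqA a)`). -/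
def nsqA (a : LorentzA) : ℝ := a.1 * a.2

/-- The real part of `a = u + σ v ∈ 𝒜`, namely `u`. -/
def ReA (a : LorentzA) : ℝ := (a.1 + a.2) / 2

/-- The imaginary part of `a = u + σ v ∈ 𝒜`, namely `v`. -/
def ImA (a : LorentzA) : ℝ := (a.1 - a.2) / 2

/-- The idempotent `(1 + σ)/2` of `𝒜`. -/
def eP : LorentzA := (1 + sA) / 2

/-- The idempotent `(1 - σ)/2` of `𝒜`. -/
def eM : LorentzA := (1 - sA) / 2

/-! ### Derivatives of maps `ℝ² → 𝒜` and `ℝ² → ℝ`. -/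

/-- `∂_u f`. -/
def duA (f : ℝ × ℝ → LorentzA) (x : ℝ × ℝ) : LorentzA := fderiv ℝ f x (1, 0)

/-- `∂_v f`. -/
def dvA (f : ℝ × ℝ → LorentzA) (x : ℝ × ℝ) : LorentzA := fderiv ℝ f x (0, 1)

/-- `∂_a f = ½ (∂_u f + σ ∂_v f)`. -/
def Da (f : ℝ × ℝ → LorentzA) (x : ℝ × ℝ) : LorentzA := ((2:ℝ)⁻¹) • (duA f x + sA * dvA f x)

/-- `∂_â f = ½ (∂_u f - σ ∂_v f)`.  A map is conformal iff `∂_â f = 0`. -/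
def Dahat (f : ℝ × ℝ → LorentzA) (x : ℝ × ℝ) : LorentzA := ((2:ℝ)⁻¹) • (duA f x - sA * dvA f x)

/-- `∂_u f` for real-valued `f`. -/
def duR (f : ℝ × ℝ → ℝ) (x : ℝ × ℝ) : ℝ := fderiv ℝ f x (1, 0)

/-- `∂_v f` for real-valued `f`. -/
def dvR (f : ℝ × ℝ → ℝ) (x : ℝ × ℝ) : ℝ := fderiv ℝ f x (0, 1)

/-- `∂²f/∂u²`. -/
def duuR (f : ℝ × ℝ → ℝ) (x : ℝ × ℝ) : ℝ := fderiv ℝ (fun y => fderiv ℝ f y (1, 0)) x (1, 0)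

/-- `∂²f/∂v²`. -/
def dvvR (f : ℝ × ℝ → ℝ) (x : ℝ × ℝ) : ℝ := fderiv ℝ (fun y => fderiv ℝ f y (0, 1)) x (0, 1)

/-- The wave operator `□ f = -∂²f/∂u² + ∂²f/∂v²`. -/
def boxR (f : ℝ × ℝ → ℝ) (x : ℝ × ℝ) : ℝ := -duuR f x + dvvR f x

/-! ### 2×2 matrices over `𝒜`. -/

abbrev M2A := Matrix (Fin 2) (Fin 2) LorentzA

/-- The conjugate transpose `B*` of `B ∈ M₂(𝒜)`. -/
def ctrans (B : M2A) : M2A := (B.map conjA).transpose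

/-- `Herm₂(𝒜) = {B ∈ M₂(𝒜) : B = B*}`. -/
def Herm2 : Set M2A := {B | B = ctrans B}

/-- `SL₂(𝒜) = {B ∈ M₂(𝒜) : det B = 1}`. -/
def SL2A : Set M2A := {B | B.det = 1}

/-- The inclusion `M₂(ℝ) ⊆ M₂(𝒜)`. -/
def mR (C : Matrix (Fin 2) (Fin 2) ℝ) : M2A := C.map toA

/-! ### The complexified Lorentz numbers `𝒜_ℂ = 𝒜 ⊗ ℂ ≅ ℂ × ℂ` (split coordinates),
and the quaternions `ℍ^{𝒜_ℂ}` with coefficients in `𝒜_ℂ`. -/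

abbrev AC : Type := ℂ × ℂ

/-- `σ ∈ 𝒜_ℂ`. -/
def sC : AC := (1, -1)

/-- The complex unit `i ∈ 𝒜_ℂ`. -/
def iC : AC := (Complex.I, Complex.I)

/-- Conjugation `u + σ v ↦ u - σ v` (`u, v ∈ ℂ`) of `𝒜_ℂ`. -/
def hatC (z : AC) : AC := (z.2, z.1)

/-- The inclusion `ℝ ⊆ 𝒜_ℂ`. -/
def rc (t : ℝ) : AC := ((t : ℂ), (t : ℂ))

/-- The inclusion `𝒜 ⊆ 𝒜_ℂ`. -/
def toAC (a : LorentzA) : AC := ((a.1 : ℂ), (a.2 : ℂ))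

/-- `a ↦ i·a`, the image of `𝒜` in `i·𝒜 ⊆ 𝒜_ℂ`. -/
def iAC (a : LorentzA) : AC := (Complex.I * a.1, Complex.I * a.2)

/-- `ℍ^{𝒜_ℂ}`: quaternions `ζ₀·1 + ζ₁·I + ζ₂·J + ζ₃·K` with `ζᵢ ∈ 𝒜_ℂ`,
`I² = J² = K² = -1`, `IJ = -JI = K`. -/
abbrev HAC := Quaternion AC

/-- The scalar quaternion `z·1`. -/
def qscalar (z : AC) : HAC := ⟨z, 0, 0, 0⟩

/-- The quaternion unit `I`. -/
def qI : HAC := ⟨0, 1, 0, 0⟩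

/-- The quaternion unit `J`. -/
def qJ : HAC := ⟨0, 0, 1, 0⟩

/-- The quaternion unit `K`. -/
def qK : HAC := ⟨0, 0, 0, 1⟩

/-- `ζ̂`: apply `𝒜_ℂ`-conjugation to each coefficient of a quaternion.
(Quaternionic conjugation `ζ̄` is `star ζ`.) -/
def qhat (q : HAC) : HAC := ⟨hatC q.re, hatC q.imI, hatC q.imJ, hatC q.imK⟩

/-- `H(ζ, ζ') = ½(ζ ζ̄' + ζ' ζ̄) = ζ₀ζ₀' + ζ₁ζ₁' + ζ₂ζ₂' + ζ₃ζ₃' ∈ 𝒜_ℂ`. -/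
def Hform (q q' : HAC) : AC := q.re * q'.re + q.imI * q'.imI + q.imJ * q'.imJ + q.imK * q'.imK

/-- `p₀·1 + i p₁·I + p₂·J + i p₃·K` with `pᵢ ∈ 𝒜`: the generic element of `ℍ₀`. -/
def mk0 (p₀ p₁ p₂ p₃ : LorentzA) : HAC :=
  qscalar (toAC p₀) + qscalar (iAC p₁) * qI + qscalar (toAC p₂) * qJ + qscalar (iAC p₃) * qK

/-- `i q₀·1 + q₁·I + i q₂·J + q₃·K` with `qᵢ ∈ 𝒜`: the generic element of `ℍ₁`. -/
def mk1 (q₀ q₁ q₂ q₃ : LorentzA) : HAC :=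
  qscalar (iAC q₀) + qscalar (toAC q₁) * qI + qscalar (iAC q₂) * qJ + qscalar (toAC q₃) * qK

/-- `ℍ₀ = {p₀·1 + i p₁·I + p₂·J + i p₃·K : pᵢ ∈ 𝒜} ⊆ ℍ^{𝒜_ℂ}`. -/
def H0set : Set HAC := {ζ | ∃ p₀ p₁ p₂ p₃ : LorentzA, ζ = mk0 p₀ p₁ p₂ p₃}

/-- `ℍ₁ = {i q₀·1 + q₁·I + i q₂·J + q₃·K : qᵢ ∈ 𝒜} ⊆ ℍ^{𝒜_ℂ}`. -/
def H1set : Set HAC := {ζ | ∃ q₀ q₁ q₂ q₃ : LorentzA, ζ = mk1 q₀ q₁ q₂ q₃}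

/-- `Spin(2,2) = {p ∈ ℍ₀ : H(p,p) = 1}`. -/
def SpinSet : Set HAC := {p | p ∈ H0set ∧ Hform p p = 1}

/-- Extraction of the `𝒜`-coefficient of an element of `𝒜 ⊆ 𝒜_ℂ`. -/
def reEx (z : AC) : LorentzA := (z.1.re, z.2.re)

/-- Extraction of the `𝒜`-coefficient of an element of `i·𝒜 ⊆ 𝒜_ℂ`. -/
def imEx (z : AC) : LorentzA := (z.1.im, z.2.im)

/-- The map `A₀ : ℍ₀ → M₂(𝒜)`,
`p₀·1 + i p₁·I + p₂·J + i p₃·K ↦ [[p₀ - σp₁, p₂ - σp₃], [-p₂ - σp₃, p₀ + σp₁]]`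
(written via coefficient extraction, so that it is a total function on `ℍ^{𝒜_ℂ}`
agreeing with `A₀` on `ℍ₀`). -/
def A0 (ζ : HAC) : M2A :=
  !![reEx ζ.re - sA * imEx ζ.imI, reEx ζ.imJ - sA * imEx ζ.imK;
     -reEx ζ.imJ - sA * imEx ζ.imK, reEx ζ.re + sA * imEx ζ.imI]

/-- The map `A₁ : ℍ₁ → M₂(𝒜)`,
`i q₀·1 + q₁·I + i q₂·J + q₃·K ↦ [[-q₁ - σq₀, -q₃ - σq₂], [-q₃ + σq₂, q₁ - σq₀]]`. -/
def A1 (ζ : HAC) : M2A :=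
  !![-reEx ζ.imI - sA * imEx ζ.re, -reEx ζ.imK - sA * imEx ζ.imJ;
     -reEx ζ.imK + sA * imEx ζ.imJ, reEx ζ.imI - sA * imEx ζ.re]

/-!
Over any commutative ring `R` in which `2` is invertible, a square root `s` of `1` turns the split
quaternions (`I² = 1`, `J² = -1`) into `M₂(R)`, their norm form becoming the determinant. A square
root `i` of `-1` in an `R`-algebra also embeds them into the Hamilton quaternions over that algebra,
by `I ↦ iI`, `J ↦ J`, `K ↦ iK`. For `R = 𝒜` and `s = σ` the image of the embedding is `ℍ₀`, on which
`A₀` is the matrix representation; hence `A₀` is multiplicative and bijective on `ℍ₀` and carries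
`H` to `det`, so it restricts to the level sets of these two functions.
-/

/-- The split quaternions over `R`, with `I² = 1`, `J² = -1` and `IJ = -JI = K`: an abstract model
of `ℍ₀`, whose generators are `iI`, `J`, `iK`. -/
abbrev SplitQuaternion (R : Type*) [CommRing R] : Type _ := QuaternionAlgebra R 1 0 (-1)

namespace SplitQuaternion

variable {R S : Type*} [CommRing R] [CommRing S] [Algebra R S]

/-- The norm form of the split quaternions, of signature `(2, 2)` when `R = ℝ`. -/
def normSq (q : SplitQuaternion R) : R := q.re ^ 2 - q.imI ^ 2 + q.imJ ^ 2 - q.imK ^ 2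

/-- The matrices representing the split quaternion units, attached to a square root `s` of `1`;
the choice `s = σ` yields `A₀`. -/
def matrixBasis {s : R} (hs : s ^ 2 = 1) :
    QuaternionAlgebra.Basis (Matrix (Fin 2) (Fin 2) R) (1 : R) 0 (-1) where
  i := !![-s, 0; 0, s]
  j := !![0, 1; -1, 0]
  k := !![0, -s; -s, 0]
  i_mul_i := by simp [Matrix.one_fin_two, ← sq s, hs]
  j_mul_j := by simp [Matrix.one_fin_two]
  i_mul_j := by simp
  j_mul_i := by simp

/-- The representation of the split quaternions by `2 × 2` matrices determined by
`matrixBasis hs`. -/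
def toMatrix {s : R} (hs : s ^ 2 = 1) : SplitQuaternion R →ₐ[R] Matrix (Fin 2) (Fin 2) R :=
  (matrixBasis hs).liftHom

theorem toMatrix_apply {s : R} (hs : s ^ 2 = 1) (q : SplitQuaternion R) :
    toMatrix hs q =
      !![q.re - s * q.imI, q.imJ - s * q.imK; -q.imJ - s * q.imK, q.re + s * q.imI] := by
  ext i j
  fin_cases i <;> fin_cases j <;>
    simp [toMatrix, QuaternionAlgebra.Basis.lift, matrixBasis, Matrix.algebraMap_matrix_apply] <;>
    ring

theorem det_toMatrix {s : R} (hs : s ^ 2 = 1) (q : SplitQuaternion R) :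
    (toMatrix hs q).det = normSq q := by
  rw [toMatrix_apply, Matrix.det_fin_two_of, normSq]
  linear_combination -(q.imI ^ 2 + q.imK ^ 2) * hs

/-- The inverse of `toMatrix hs` for `s ^ 2 = 1`, where `t` stands for `1 / 2`. -/
def ofMatrix (s t : R) (M : Matrix (Fin 2) (Fin 2) R) : SplitQuaternion R :=
  ⟨t * (M 0 0 + M 1 1), t * s * (M 1 1 - M 0 0), t * (M 0 1 - M 1 0), -(t * s * (M 0 1 + M 1 0))⟩

theorem leftInverse_ofMatrix {s t : R} (hs : s ^ 2 = 1) (ht : 2 * t = 1) :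
    Function.LeftInverse (ofMatrix s t) (toMatrix hs) := by
  intro q
  rw [toMatrix_apply]
  ext <;> simp only [ofMatrix, Matrix.of_apply, Matrix.cons_val]
  · linear_combination q.re * ht
  · linear_combination q.imI * ht + 2 * t * q.imI * hs
  · linear_combination q.imJ * ht
  · linear_combination q.imK * ht + 2 * t * q.imK * hs

theorem rightInverse_ofMatrix {s t : R} (hs : s ^ 2 = 1) (ht : 2 * t = 1) :
    Function.RightInverse (ofMatrix s t) (toMatrix hs) := by
  intro M
  rw [toMatrix_apply]
  ext i j
  fin_cases i <;> fin_cases j <;>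
    simp only [ofMatrix, Matrix.of_apply, Matrix.cons_val, Fin.zero_eta, Fin.mk_one]
  · linear_combination M 0 0 * ht - t * (M 1 1 - M 0 0) * hs
  · linear_combination M 0 1 * ht + t * (M 0 1 + M 1 0) * hs
  · linear_combination M 1 0 * ht + t * (M 0 1 + M 1 0) * hs
  · linear_combination M 1 1 * ht + t * (M 1 1 - M 0 0) * hs

theorem toMatrix_bijective {s : R} (hs : s ^ 2 = 1) (h2 : IsUnit (2 : R)) :
    Function.Bijective (toMatrix hs) := by
  obtain ⟨t, ht⟩ := h2.exists_right_inv
  exact ⟨(leftInverse_ofMatrix hs ht).injective, (rightInverse_ofMatrix hs ht).surjective⟩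

/-- The Hamilton quaternion with coordinates `a`, `b`, `c`, `d`. It stands in for the anonymous
constructor, whose type `QuaternionAlgebra S (-1) 0 (-1)` is not reducibly `Quaternion S`. -/
def hamilton (a b c d : S) : Quaternion S := ⟨a, b, c, d⟩

@[simp]
theorem re_hamilton (a b c d : S) : (hamilton a b c d).re = a := rfl

@[simp]
theorem imI_hamilton (a b c d : S) : (hamilton a b c d).imI = b := rfl

@[simp]
theorem imJ_hamilton (a b c d : S) : (hamilton a b c d).imJ = c := rfl

@[simp]
theorem imK_hamilton (a b c d : S) : (hamilton a b c d).imK = d := rfl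

theorem one_eq_hamilton : (1 : Quaternion S) = hamilton 1 0 0 0 := rfl

theorem algebraMap_eq_hamilton (r : R) :
    algebraMap R (Quaternion S) r = hamilton (algebraMap R S r) 0 0 0 := rfl

variable (R) in
/-- The split quaternion units inside the Hamilton quaternions over an algebra containing a square
root `u` of `-1`: the first and third units are multiplied by `u`. -/
def hamiltonBasis {u : S} (hu : u ^ 2 = -1) :
    QuaternionAlgebra.Basis (Quaternion S) (1 : R) 0 (-1) where
  i := hamilton 0 u 0 0
  j := hamilton 0 0 1 0
  k := hamilton 0 0 0 u
  i_mul_i := by ext <;> simp [one_eq_hamilton, ← sq u, hu]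
  j_mul_j := by ext <;> simp [one_eq_hamilton]
  i_mul_j := by ext <;> simp
  j_mul_i := by ext <;> simp

/-- The map from the split quaternions over `R` to the Hamilton quaternions over `S` determined by
`hamiltonBasis R hu`. -/
def toHamilton {u : S} (hu : u ^ 2 = -1) : SplitQuaternion R →ₐ[R] Quaternion S :=
  (hamiltonBasis R hu).liftHom

theorem toHamilton_apply {u : S} (hu : u ^ 2 = -1) (q : SplitQuaternion R) :
    toHamilton hu q = hamilton (algebraMap R S q.re) (u * algebraMap R S q.imI)
      (algebraMap R S q.imJ) (u * algebraMap R S q.imK) := by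
  ext <;> simp [toHamilton, QuaternionAlgebra.Basis.lift, hamiltonBasis, algebraMap_eq_hamilton,
    Algebra.smul_def, mul_comm]

theorem normSq_toHamilton {u : S} (hu : u ^ 2 = -1) (q : SplitQuaternion R) :
    Quaternion.normSq (toHamilton hu q) = algebraMap R S (normSq q) := by
  simp only [toHamilton_apply, Quaternion.normSq_def', re_hamilton, imI_hamilton,
    imJ_hamilton, imK_hamilton, normSq, map_add, map_sub, map_pow]
  linear_combination (algebraMap R S q.imI ^ 2 + algebraMap R S q.imK ^ 2) * hu

end SplitQuaternion

open SplitQuaternion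

theorem sA_sq : sA ^ 2 = 1 := by
  ext <;> simp [sA]

theorem iC_sq : iC ^ 2 = -1 := by
  ext <;> simp [iC]

theorem isUnit_two_lorentzA : IsUnit (2 : LorentzA) :=
  Prod.isUnit_iff.mpr ⟨isUnit_iff_ne_zero.mpr two_ne_zero, isUnit_iff_ne_zero.mpr two_ne_zero⟩

/-- The `𝒜`-algebra structure on `𝒜_ℂ` given by the inclusion `𝒜 ⊆ 𝒜_ℂ`. -/
local instance : Algebra LorentzA AC :=
  (Complex.ofRealHom.prodMap Complex.ofRealHom).toAlgebra

theorem algebraMap_eq_toAC (a : LorentzA) : algebraMap LorentzA AC a = toAC a := rfl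

theorem toAC_injective : Function.Injective toAC :=
  fun _ _ h ↦ Prod.ext (Complex.ofReal_injective (congrArg Prod.fst h))
    (Complex.ofReal_injective (congrArg Prod.snd h))

theorem iAC_eq_iC_mul (a : LorentzA) : iAC a = iC * toAC a := rfl

theorem reEx_toAC (a : LorentzA) : reEx (toAC a) = a := rfl

theorem imEx_iAC (a : LorentzA) : imEx (iAC a) = a := by
  simp [imEx, iAC]

theorem Hform_self (p : HAC) : Hform p p = Quaternion.normSq p := by
  simp only [Hform, Quaternion.normSq_def', sq]

theorem qscalar_eq_hamilton (z : AC) : qscalar z = hamilton z 0 0 0 := rfl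

theorem qI_eq_hamilton : qI = hamilton 0 1 0 0 := rfl

theorem qJ_eq_hamilton : qJ = hamilton 0 0 1 0 := rfl

theorem qK_eq_hamilton : qK = hamilton 0 0 0 1 := rfl

theorem mk0_eq_toHamilton (p₀ p₁ p₂ p₃ : LorentzA) :
    mk0 p₀ p₁ p₂ p₃ = toHamilton iC_sq ⟨p₀, p₁, p₂, p₃⟩ := by
  rw [toHamilton_apply]
  ext <;> simp [mk0, qscalar_eq_hamilton, qI_eq_hamilton, qJ_eq_hamilton, qK_eq_hamilton,
    algebraMap_eq_toAC, iAC_eq_iC_mul]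

theorem H0set_eq_range_toHamilton :
    H0set = Set.range (toHamilton iC_sq : SplitQuaternion LorentzA → HAC) := by
  ext p
  constructor
  · rintro ⟨p₀, p₁, p₂, p₃, rfl⟩
    exact ⟨_, (mk0_eq_toHamilton p₀ p₁ p₂ p₃).symm⟩
  · rintro ⟨q, rfl⟩
    exact ⟨_, _, _, _, (mk0_eq_toHamilton q.re q.imI q.imJ q.imK).symm⟩

theorem A0_toHamilton (q : SplitQuaternion LorentzA) :
    A0 (toHamilton iC_sq q) = toMatrix sA_sq q := by
  simp only [A0, toHamilton_apply, toMatrix_apply, algebraMap_eq_toAC, ← iAC_eq_iC_mul,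
    re_hamilton, imI_hamilton, imJ_hamilton, imK_hamilton, reEx_toAC, imEx_iAC]

theorem A0_bijOn_H0set : Set.BijOn A0 H0set Set.univ := by
  have hbij := toMatrix_bijective sA_sq isUnit_two_lorentzA
  rw [H0set_eq_range_toHamilton]
  refine ⟨Set.mapsTo_univ _ _, ?_, fun B _ ↦ ?_⟩
  · rintro _ ⟨p, rfl⟩ _ ⟨q, rfl⟩ h
    rw [A0_toHamilton, A0_toHamilton] at h
    rw [hbij.injective h]
  · obtain ⟨q, rfl⟩ := hbij.surjective B
    exact ⟨_, ⟨q, rfl⟩, A0_toHamilton q⟩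

theorem A0_mul {p q : HAC} (hp : p ∈ H0set) (hq : q ∈ H0set) : A0 (p * q) = A0 p * A0 q := by
  rw [H0set_eq_range_toHamilton] at hp hq
  obtain ⟨p, rfl⟩ := hp
  obtain ⟨q, rfl⟩ := hq
  rw [← map_mul, A0_toHamilton, A0_toHamilton, A0_toHamilton, map_mul]

theorem toAC_det_A0 {p : HAC} (hp : p ∈ H0set) : toAC (A0 p).det = Hform p p := by
  rw [H0set_eq_range_toHamilton] at hp
  obtain ⟨q, rfl⟩ := hp
  rw [A0_toHamilton, det_toMatrix, Hform_self, normSq_toHamilton, algebraMap_eq_toAC]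

theorem stmt3_general (c : LorentzA) :
    Set.BijOn A0 {p | p ∈ H0set ∧ Hform p p = toAC c} {B | B.det = c} ∧
    ∀ p ∈ H0set, ∀ q ∈ H0set, A0 (p * q) = A0 p * A0 q := by
  refine ⟨⟨fun p ⟨hp, hpc⟩ ↦ ?_, A0_bijOn_H0set.injOn.mono fun _ ↦ And.left, fun B hB ↦ ?_⟩,
    fun p hp q hq ↦ A0_mul hp hq⟩
  · exact toAC_injective ((toAC_det_A0 hp).trans hpc)
  · obtain ⟨p, hp, rfl⟩ := A0_bijOn_H0set.surjOn (Set.mem_univ B)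
    exact ⟨p, ⟨hp, (toAC_det_A0 hp).symm.trans (congrArg toAC hB)⟩, rfl⟩

/-- The map `A₀` restricts to a group isomorphism from
`Spin(2,2) = {p ∈ ℍ₀ : H(p,p) = 1}` onto `SL₂(𝒜) = {B ∈ M₂(𝒜) : det B = 1}`:
it is a bijection between the two sets and is multiplicative on `Spin(2,2)`. -/
theorem stmt3 :
    Set.BijOn A0 SpinSet SL2A ∧
    ∀ p ∈ SpinSet, ∀ q ∈ SpinSet, A0 (p * q) = A0 p * A0 q := by
  exact ⟨(stmt3_general 1).1, fun p hp q hq ↦ (stmt3_general 1).2 p hp.1 q hq.1⟩
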